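/- arXiv:1310.0989 — 2 statements merged into one kernel-verified Lean document; each statement's English description precedes it below -/
import Mathlib

section
/- Let X be a binomial random variable with parameters a and p where p = k/n ∈ [1/5, 1/4]. Then |P(X < ap) − 1/2| < 0.71/√a. -/
/-! The distribution function of `Bin(a, p)` at a fixed integer decreases in `p`, so with
`m < a p ≤ m + 1` both bounds reduce to binomial variables with integer mean: for the upper bound `p`
is lowered to `m / a`, for the lower bound it is raised to `(m + 1) / a`.

Let `X` have integer mean `m = a p`, and let `b = P(X = m)`. Then `b ≤ 1 / √(2 π a p (1 - p))` by
Stirling (`binTerm_le`), and `P(X ≤ m) - 1/2 = (b + D) / 2`, `1/2 - P(X < m) = (b - D) / 2`, where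
`D = P(X < m) - P(X > m)`. It remains to estimate `D / b`, which is asymptotically `(1 - 2 p) / 3`.

* `D ≥ 0` for `p ≤ 1/2` (`W_sum_le`), since `P(X = m - j) - P(X = m + j)` has a single sign change in
  `j` and zero first moment. This settles the lower bound.
* `D ≤ 0.59 (1 - 2 p) b` for `m ≥ 16` (`W_sum_diff`). The ratio `P(X = m + j) / P(X = m - j)` is at
  least `1 - A j + B j ^ 3` for suitable `A`, `B` (`W_ge_cubic`), and the odd one-sided moments
  of the binomial distribution telescope. This settles the upper bound for large `m`.

For `m < 16` the upper bound is a finite computation with integers (`small_check`), at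
`p = max (m / a) (1 / 5)`. -/

/-! ### Binomial probabilities -/

/-- The binomial probability `P(X = i)` for `X ~ Bin(a, p)`; it vanishes for `i > a`. -/
noncomputable def binTerm (a : ℕ) (p : ℝ) (i : ℕ) : ℝ := (a.choose i : ℝ) * p ^ i * (1 - p) ^ (a - i)

theorem binTerm_eq_eval (a : ℕ) (p : ℝ) (i : ℕ) :
    binTerm a p i = (bernsteinPolynomial ℝ a i).eval p := by
  simp [binTerm, bernsteinPolynomial]

/-- The derivative of the binomial distribution function in `p` telescopes to a single term. -/
theorem derivative_sum_bernstein (a M : ℕ) :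
    Polynomial.derivative (∑ i ∈ Finset.range (M + 1), bernsteinPolynomial ℝ a i)
      = -a * bernsteinPolynomial ℝ (a - 1) M := by
  induction M with
  | zero => simp [bernsteinPolynomial.derivative_zero]
  | succ M ih =>
    rw [Finset.sum_range_succ, Polynomial.derivative_add, ih, bernsteinPolynomial.derivative_succ]
    ring

theorem binTerm_nonneg (a i : ℕ) {p : ℝ} (h0 : 0 ≤ p) (h1 : p ≤ 1) : 0 ≤ binTerm a p i := by
  have : 0 ≤ 1 - p := by linarith
  unfold binTerm; positivity

theorem binCdf_antitone (a M : ℕ) {p p' : ℝ} (h0 : 0 ≤ p) (hpp : p ≤ p') (h1 : p' ≤ 1) :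
    ∑ i ∈ Finset.range (M + 1), binTerm a p' i ≤ ∑ i ∈ Finset.range (M + 1), binTerm a p i := by
  set F := ∑ i ∈ Finset.range (M + 1), bernsteinPolynomial ℝ a i with hF
  have key : AntitoneOn (fun x => F.eval x) (Set.Icc (0 : ℝ) 1) := by
    refine antitoneOn_of_deriv_nonpos (convex_Icc 0 1) F.continuous.continuousOn
      F.differentiable.differentiableOn fun x hx => ?_
    rw [interior_Icc] at hx
    rw [Polynomial.deriv, hF, derivative_sum_bernstein]
    have := binTerm_nonneg (a - 1) M hx.1.le hx.2.le
    rw [binTerm_eq_eval] at this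
    simp only [Polynomial.eval_mul, Polynomial.eval_neg, Polynomial.eval_natCast]
    have h2 : (0 : ℝ) ≤ a := a.cast_nonneg
    nlinarith [mul_nonneg h2 this]
  have := key ⟨h0, hpp.trans h1⟩ ⟨h0.trans hpp, h1⟩ hpp
  simpa [hF, Polynomial.eval_finsetSum, binTerm_eq_eval] using this

theorem binTerm_sum (a : ℕ) (p : ℝ) : ∑ i ∈ Finset.range (a + 1), binTerm a p i = 1 := by
  have := congrArg (Polynomial.eval p) (bernsteinPolynomial.sum ℝ a)
  simpa [Polynomial.eval_finsetSum, binTerm_eq_eval] using this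

/-- At an integer mean `m = a p`, Stirling's formula gives `P(X = m) ≤ 1 / √(2 π a p (1 - p))`. The error
factors of the three factorials are absorbed since `stirlingSeq` decreases to `√π`. -/
theorem binTerm_le (m r : ℕ) (hm : 1 ≤ m) (hr : 1 ≤ r) :
    binTerm (m + r) (m / (m + r)) m ≤ √((m + r) / (2 * Real.pi * m * r)) := by
  have hm0 : (0 : ℝ) < m := by exact_mod_cast hm
  have hr0 : (0 : ℝ) < r := by exact_mod_cast hr
  have hS : ∀ n : ℕ, 1 ≤ n → (n.factorial : ℝ)
      = Stirling.stirlingSeq n * (√(2 * n : ℝ) * (n / Real.exp 1) ^ n) := by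
    intro n hn
    have : (0 : ℝ) < n := by exact_mod_cast hn
    unfold Stirling.stirlingSeq
    field_simp
  have hSpos : ∀ n : ℕ, 1 ≤ n → 0 < Stirling.stirlingSeq n := by
    intro n hn
    obtain ⟨k, rfl⟩ := Nat.exists_eq_add_of_le' hn
    exact Stirling.stirlingSeq'_pos k
  have hanti : Stirling.stirlingSeq (m + r) ≤ Stirling.stirlingSeq r := by
    obtain ⟨k, rfl⟩ := Nat.exists_eq_add_of_le' hr
    have := Stirling.stirlingSeq'_antitone (show k ≤ m + k by omega)
    simpa [Function.comp, Nat.succ_eq_add_one, ← add_assoc] using this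
  have hpi := Stirling.sqrt_pi_le_stirlingSeq (n := m) (by omega)
  have hch : ((m + r).choose m : ℝ) = (m + r).factorial / (m.factorial * r.factorial) := by
    rw [Nat.cast_choose ℝ (Nat.le_add_right m r), Nat.add_sub_cancel_left]
  have e : binTerm (m + r) (m / (m + r)) m = Stirling.stirlingSeq (m + r) /
      (Stirling.stirlingSeq m * Stirling.stirlingSeq r) *
      (√(2 * ((m + r : ℕ) : ℝ)) / (√(2 * m : ℝ) * √(2 * r : ℝ))) := by
    have h1 : (1 : ℝ) - m / (m + r) = r / (m + r) := by field_simp; ring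
    have := (hSpos m hm).ne'
    have := (hSpos r hr).ne'
    unfold binTerm
    rw [hch, hS m hm, hS r hr, hS (m + r) (by omega), h1, Nat.add_sub_cancel_left]
    push_cast
    simp only [div_pow, pow_add]
    field_simp
  have e2 : √(2 * ((m + r : ℕ) : ℝ)) / (√(2 * m : ℝ) * √(2 * r : ℝ))
      = √((m + r) / (2 * m * r)) := by
    rw [← Real.sqrt_mul (by positivity), ← Real.sqrt_div (by positivity)]
    congr 1; push_cast; field_simp
  have e3 : √((m + r) / (2 * Real.pi * m * r)) = (√Real.pi)⁻¹ * √((m + r : ℝ) / (2 * m * r)) := by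
    rw [← Real.sqrt_inv, ← Real.sqrt_mul (by positivity)]
    congr 1; field_simp
  rw [e, e2, e3]
  have hsp : 0 < √Real.pi := Real.sqrt_pos.2 Real.pi_pos
  gcongr
  rw [div_le_iff₀ (mul_pos (hSpos m hm) (hSpos r hr))]
  calc _ ≤ 1 * Stirling.stirlingSeq r := by linarith
    _ ≤ ((√Real.pi)⁻¹ * Stirling.stirlingSeq m) * Stirling.stirlingSeq r := by
      gcongr
      · exact (hSpos r hr).le
      · rw [inv_mul_eq_div, le_div_iff₀ hsp]; linarith
    _ = _ := by ring

/-! ### Tail ratios around an integer mean -/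

/-- For `X ~ Bin(m + r, m / (m + r))`, with integer mean `m`, the ratio `P(X = m + j) / P(X = m)`.
Exchanging successes and failures, `W r m j` is `P(X = m - j) / P(X = m)`. One factor is zero once
`j > r`, so no truncation is needed. -/
noncomputable def W (m r j : ℕ) : ℝ :=
  ∏ i ∈ Finset.range j, ((m : ℝ) * (r - i)) / (r * (m + i + 1))

theorem W_zero (m r : ℕ) : W m r 0 = 1 := by simp [W]

theorem W_succ (m r j : ℕ) :
    W m r (j + 1) = W m r j * (((m : ℝ) * (r - j)) / (r * (m + j + 1))) := by
  unfold W; exact Finset.prod_range_succ _ _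

theorem W_rec (m r j : ℕ) (hr : 1 ≤ r) :
    W m r (j + 1) * (r * (m + j + 1)) = W m r j * (m * (r - j)) := by
  have hr0 : (0 : ℝ) < r := by exact_mod_cast hr
  rw [W_succ]; field_simp

theorem W_eq_zero (m r j : ℕ) (h : r < j) : W m r j = 0 := by
  unfold W
  exact Finset.prod_eq_zero (Finset.mem_range.2 h) (by simp)

theorem W_nonneg (m r j : ℕ) : 0 ≤ W m r j := by
  rcases lt_or_ge r j with h | h
  · rw [W_eq_zero m r j h]
  · refine Finset.prod_nonneg fun i hi => ?_
    have hi : i ≤ r := (Finset.mem_range.1 hi).le.trans h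
    have : (0 : ℝ) ≤ r - i := sub_nonneg.2 (by exact_mod_cast hi)
    positivity

/-- The first one-sided moment, by telescoping (De Moivre's mean deviation formula). -/
theorem W_sum_one (m r n : ℕ) (hr : 1 ≤ r) (hn : r < n) :
    (m + r : ℝ) * ∑ j ∈ Finset.range n, (j : ℝ) * W m r j = m * r := by
  have h : ∀ n : ℕ, (m + r : ℝ) * ∑ j ∈ Finset.range n, (j : ℝ) * W m r j
      = m * r - r * (m + n) * W m r n := by
    intro n
    induction n with
    | zero => simp [W_zero]; ring
    | succ n ih =>
      rw [Finset.sum_range_succ, mul_add, ih]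
      have := W_rec m r n hr
      push_cast
      linear_combination this
  rw [h, W_eq_zero m r n hn]; ring

/-- The third one-sided moment telescopes up to a second-moment correction of lower order. -/
theorem W_sum_three (m r n : ℕ) (hr : 1 ≤ r) (hn : r < n) :
    (m + r : ℝ) * ∑ j ∈ Finset.range n, (j : ℝ) ^ 3 * W m r j
      = 2 * m * r * ∑ j ∈ Finset.range n, (j : ℝ) * W m r j
        + (r - m) * ∑ j ∈ Finset.range n, (j : ℝ) ^ 2 * W m r j := by
  have h : ∀ n : ℕ, (m + r : ℝ) * ∑ j ∈ Finset.range n, (j : ℝ) ^ 3 * W m r j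
      = 2 * m * r * ∑ j ∈ Finset.range n, (j : ℝ) * W m r j
        + (r - m) * ∑ j ∈ Finset.range n, (j : ℝ) ^ 2 * W m r j
        - r * (m + n) * n * (n - 1) * W m r n := by
    intro n
    induction n with
    | zero => simp
    | succ n ih =>
      simp only [Finset.sum_range_succ, mul_add]
      rw [ih]
      have := W_rec m r n hr
      push_cast
      linear_combination (n * (n + 1) : ℝ) * this
  rw [h, W_eq_zero m r n hn]; ring

theorem binTerm_add (m r j : ℕ) (hr : 1 ≤ r) (hj : j ≤ r) :
    binTerm (m + r) (m / (m + r)) (m + j) = binTerm (m + r) (m / (m + r)) m * W m r j := by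
  have hr0 : (0 : ℝ) < r := by exact_mod_cast hr
  induction j with
  | zero => simp [W_zero]
  | succ j ih =>
    have ih := ih (by omega)
    rw [W_succ, ← mul_assoc, ← ih]
    have h1 : (1 : ℝ) - m / (m + r) = r / (m + r) := by field_simp; ring
    have hc : ((m + r).choose (m + j + 1) : ℝ) * (m + j + 1) = (m + r).choose (m + j) * (r - j) := by
      have := Nat.choose_succ_right_eq (m + r) (m + j)
      rw [show m + r - (m + j) = r - j by omega] at this
      have h2 : ((r - j : ℕ) : ℝ) = r - j := by rw [Nat.cast_sub (by omega)]
      rw [← h2]; exact_mod_cast this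
    have hc' : ((m + r).choose (m + j + 1) : ℝ) = (m + r).choose (m + j) * (r - j) / (m + j + 1) := by
      rw [← hc]; field_simp
    unfold binTerm
    rw [h1, ← add_assoc, hc', show m + r - (m + j) = (m + r - (m + j + 1)) + 1 by omega,
      pow_succ _ (m + r - (m + j + 1)), pow_succ _ (m + j)]
    field_simp

theorem binTerm_symm (m r i : ℕ) (hr : 1 ≤ r) (hi : i ≤ m + r) :
    binTerm (m + r) (m / (m + r)) i = binTerm (r + m) (r / (r + m)) (m + r - i) := by
  have hr0 : (0 : ℝ) < r := by exact_mod_cast hr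
  have h1 : (1 : ℝ) - m / (m + r) = r / (r + m) := by field_simp; ring
  have h2 : (1 : ℝ) - r / (r + m) = m / (m + r) := by field_simp; ring
  unfold binTerm
  rw [h1, h2, add_comm r m, Nat.choose_symm hi, show m + r - (m + r - i) = i by omega]
  ring

theorem binTerm_sub (m r j : ℕ) (hm : 1 ≤ m) (hr : 1 ≤ r) (hj : j ≤ m) :
    binTerm (m + r) (m / (m + r)) (m - j) = binTerm (m + r) (m / (m + r)) m * W r m j := by
  rw [binTerm_symm m r _ hr (by omega), binTerm_symm m r m hr (by omega),
    show m + r - (m - j) = r + j by omega, show m + r - m = r by omega]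
  exact binTerm_add r m j hm hj

theorem W_sum_extend (m r n : ℕ) (hn : r < n) :
    ∑ j ∈ Finset.range (r + 1), W m r j = ∑ j ∈ Finset.range n, W m r j := by
  refine Finset.sum_subset (Finset.range_mono hn) fun j _ hj => ?_
  exact W_eq_zero m r j (by simpa using hj)

theorem binCdf_le_eq (m r n : ℕ) (hm : 1 ≤ m) (hr : 1 ≤ r) (hn : m < n) :
    ∑ i ∈ Finset.range (m + 1), binTerm (m + r) (m / (m + r)) i
      = binTerm (m + r) (m / (m + r)) m * ∑ j ∈ Finset.range n, W r m j := by
  rw [← W_sum_extend r m n hn, ← Finset.sum_range_reflect, Finset.mul_sum]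
  refine Finset.sum_congr rfl fun j hj => ?_
  have := Finset.mem_range.1 hj
  rw [← binTerm_sub m r j hm hr (by omega)]
  congr 1

theorem binTerm_total (m r n : ℕ) (hm : 1 ≤ m) (hr : 1 ≤ r) (hmn : m < n) (hrn : r < n) :
    binTerm (m + r) (m / (m + r)) m *
      (∑ j ∈ Finset.range n, W r m j + ∑ j ∈ Finset.range n, W m r j - 1) = 1 := by
  have h := binTerm_sum (m + r) (m / (m + r))
  rw [add_assoc m r 1, Finset.sum_range_add] at h
  have h1 := binCdf_le_eq m r n hm hr hmn
  rw [Finset.sum_range_succ] at h1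
  have h2 : ∑ j ∈ Finset.range (r + 1), binTerm (m + r) (m / (m + r)) (m + j)
      = binTerm (m + r) (m / (m + r)) m * ∑ j ∈ Finset.range n, W m r j := by
    rw [← W_sum_extend m r n hrn, Finset.mul_sum]
    refine Finset.sum_congr rfl fun j hj => ?_
    have := Finset.mem_range.1 hj
    exact binTerm_add m r j hr (by omega)
  linear_combination h + -h2 - h1

/-! ### Comparison of the two tails -/

/-- If the mean `m` is at most half of `m + r`, then `P(X > m) ≤ P(X < m)`. The differences
`P(X = m - j) - P(X = m + j)` change sign only once, from `+` to `-`, while their first moment is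
zero. -/
theorem W_sum_le (m r n : ℕ) (hm : 1 ≤ m) (hmr : m ≤ r) (hn : r < n) :
    ∑ j ∈ Finset.range n, W m r j ≤ ∑ j ∈ Finset.range n, W r m j := by
  have hr : 1 ≤ r := hm.trans hmr
  have hm0 : (0 : ℝ) < m := by exact_mod_cast hm
  have hr0 : (0 : ℝ) < r := by exact_mod_cast hr
  have hmr' : (m : ℝ) ≤ r := by exact_mod_cast hmr
  by_cases hex : ∃ j, W r m j < W m r j
  swap
  · push Not at hex
    exact Finset.sum_le_sum fun j _ => hex j
  classical
  obtain ⟨J, hJ, hmin⟩ : ∃ J, W r m J < W m r J ∧ ∀ j < J, W m r j ≤ W r m j :=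
    ⟨Nat.find hex, Nat.find_spec hex, fun j hj => not_lt.1 (Nat.find_min hex hj)⟩
  obtain ⟨k, rfl⟩ : ∃ k, J = k + 1 := by
    rcases J with _ | k
    · simp [W_zero] at hJ
    · exact ⟨k, rfl⟩
  have hkr : k < r := by
    by_contra h
    rw [W_eq_zero m r (k + 1) (by omega)] at hJ
    exact absurd hJ (not_lt.2 (W_nonneg _ _ _))
  -- At the first sign change the right ratio exceeds the left one; this forces `k (k + 1)` to be
  -- large, and the right ratio exceeds the left one from then on.
  have hk : (m : ℝ) * r * (r - m) ≤ k * (k + 1) * (r + m) * (r - m) := by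
    by_contra hlt
    push Not at hlt
    have hkm : (0 : ℝ) ≤ r - k := sub_nonneg.2 (by exact_mod_cast hkr.le)
    have hle : (m : ℝ) * (r - k) / (r * (m + k + 1)) ≤ r * (m - k) / (m * (r + k + 1)) := by
      rw [div_le_div_iff₀ (by positivity) (by positivity)]
      nlinarith
    have h0 : 0 ≤ (m : ℝ) * (r - k) / (r * (m + k + 1)) := by positivity
    rw [W_succ, W_succ] at hJ
    have := mul_le_mul (hmin k (by omega)) hle h0 (W_nonneg _ _ _)
    linarith
  have hafter : ∀ i, W r m (k + 1 + i) ≤ W m r (k + 1 + i) := by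
    intro i
    induction i with
    | zero => exact hJ.le
    | succ i ih =>
      rcases lt_or_ge m (k + 1 + (i + 1)) with h | h
      · rw [W_eq_zero r m _ h]; exact W_nonneg _ _ _
      · rw [← add_assoc, W_succ, W_succ]
        set l := k + 1 + i with hl
        have hlm : (0 : ℝ) ≤ m - l := sub_nonneg.2 (by exact_mod_cast (by omega : l ≤ m))
        have hkl : (k : ℝ) ≤ l := by exact_mod_cast (by omega : k ≤ l)
        have hk0 : (0 : ℝ) ≤ k := k.cast_nonneg
        have h2 : (k : ℝ) * (k + 1) * (r + m) * (r - m) ≤ l * (l + 1) * (r + m) * (r - m) := by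
          have := sub_nonneg.2 hmr'
          gcongr
        refine mul_le_mul ih ?_ (by positivity) (W_nonneg _ _ _)
        rw [div_le_div_iff₀ (by positivity) (by positivity)]
        nlinarith
  -- Subtracting a multiple of the vanishing first moment makes every summand nonnegative.
  have hprod : ∀ j : ℕ, 0 ≤ (W r m j - W m r j) * ((k + 1 : ℝ) - j) := by
    intro j
    rcases lt_or_ge j (k + 1) with h | h
    · refine mul_nonneg (sub_nonneg.2 (hmin j h)) (sub_nonneg.2 ?_)
      exact_mod_cast h.le
    · obtain ⟨i, rfl⟩ := Nat.exists_eq_add_of_le h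
      refine mul_nonneg_of_nonpos_of_nonpos (sub_nonpos.2 (hafter i)) (sub_nonpos.2 ?_)
      exact_mod_cast h
  have hsum := Finset.sum_nonneg fun j (_ : j ∈ Finset.range n) => hprod j
  have hexp : ∑ j ∈ Finset.range n, (W r m j - W m r j) * ((k + 1 : ℝ) - j)
      = (k + 1) * (∑ j ∈ Finset.range n, W r m j - ∑ j ∈ Finset.range n, W m r j)
        - (∑ j ∈ Finset.range n, (j : ℝ) * W r m j - ∑ j ∈ Finset.range n, (j : ℝ) * W m r j) := by
    rw [← Finset.sum_sub_distrib, ← Finset.sum_sub_distrib, Finset.mul_sum,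
      ← Finset.sum_sub_distrib]
    exact Finset.sum_congr rfl fun j _ => by ring
  have h1 := W_sum_one m r n hr hn
  have h2 := W_sum_one r m n hm (by omega)
  have h3 : ∑ j ∈ Finset.range n, (j : ℝ) * W r m j = ∑ j ∈ Finset.range n, (j : ℝ) * W m r j := by
    have : (m + r : ℝ) ≠ 0 := by positivity
    apply mul_left_cancel₀ this
    linarith
  rw [hexp, h3, sub_self, sub_zero] at hsum
  have := nonneg_of_mul_nonneg_right hsum (by positivity : (0 : ℝ) < k + 1)
  linarith

/-- The tangent-line form of AM-GM: the maximum of `A j - B j ^ 3` over `j ≥ 0` is at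
`j = √(A / (3 B))`. -/
theorem cubic_min {A B c j : ℝ} (hA : 0 ≤ A) (hB : 0 < B) (hc : 0 ≤ c) (hj : 0 ≤ j)
    (h : 4 * A ^ 3 ≤ 27 * B * c ^ 2) : A * j - B * j ^ 3 ≤ c := by
  set τ := √(A / (3 * B)) with hτ
  have hτ0 : 0 ≤ τ := Real.sqrt_nonneg _
  have hτ2 : τ ^ 2 = A / (3 * B) := Real.sq_sqrt (by positivity)
  have hA' : A = 3 * B * τ ^ 2 := by rw [hτ2]; field_simp
  have h1 : 2 * B * τ ^ 3 ≤ c := by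
    refine abs_le_of_sq_le_sq' ?_ hc |>.2
    rw [hA'] at h
    have : B * (4 * 27 * B ^ 2 * τ ^ 6) ≤ B * (27 * c ^ 2) := by nlinarith
    have := le_of_mul_le_mul_left this hB
    nlinarith
  have h2 : 0 ≤ B * ((j - τ) ^ 2 * (j + 2 * τ)) := by positivity
  rw [hA']
  nlinarith

/-- The inequality behind the induction step of `W_ge_cubic`. The two sides change sign at `T s = 1`
and `T s = 4 / 3`; between these it is trivial, below `1` it follows from `P ≤ 1`, and above `4 / 3`
from the lower bound for `P`. -/
theorem cubic_step_core {m j δ s A B P T : ℝ} (hmp : 0 < m) (hj0 : 0 ≤ j) (hs0 : 0 ≤ s)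
    (hδ0 : 0 ≤ δ) (hms : 1 ≤ m * s) (hB : B = δ * s / 4) (hA : A = δ + B)
    (hP : P = 1 - A * j + B * j ^ 3) (hT : T = j * (j + 1)) (hZ : 0 ≤ m ^ 2 + m - T)
    (hmP : 3 / 4 * (m ^ 2 + m) ≤ m ^ 2 * P) :
    (m ^ 2 + m - T) * (3 / 4 * (T * s) - 1) ≤ m ^ 2 * P * (T * s - 1) := by
  have hB0 : 0 ≤ B := by rw [hB]; positivity
  have hT0 : 0 ≤ T := by rw [hT]; positivity
  have hTs : 0 ≤ T * s := mul_nonneg hT0 hs0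
  rcases le_or_gt (T * s) 1 with h1 | h1
  · have hTm : T ≤ m := by nlinarith [mul_le_mul_of_nonneg_left hms hT0]
    have hP1 : P ≤ 1 := by
      have : B * j ^ 2 ≤ A := by
        have e : j ^ 2 ≤ T := by rw [hT]; nlinarith
        have : B * j ^ 2 ≤ B * T := by gcongr
        have : B * T = δ * (T * s) / 4 := by rw [hB]; ring
        nlinarith
      have := mul_nonneg hj0 (sub_nonneg.2 this)
      rw [hP]; linarith
    have e1 : m ^ 2 * P ≤ m ^ 2 + m - T := by nlinarith [mul_le_mul_of_nonneg_left hP1 (sq_nonneg m)]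
    have e2 : 1 - T * s ≤ 1 - 3 / 4 * (T * s) := by linarith
    have := mul_le_mul e1 e2 (by linarith) hZ
    linarith
  · have e1 : 3 / 4 * (m ^ 2 + m) * (T * s - 1) ≤ m ^ 2 * P * (T * s - 1) := by
      gcongr
    rcases le_or_gt (3 / 4 * (T * s)) 1 with h2 | h2
    · have : 0 ≤ 3 / 4 * (m ^ 2 + m) * (T * s - 1) :=
        mul_nonneg (by positivity) (by linarith)
      nlinarith
    · have : (m ^ 2 + m - T) * (3 / 4 * (T * s) - 1)
          ≤ (m ^ 2 + m) * (3 / 4 * (T * s) - 1) :=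
        mul_le_mul_of_nonneg_right (by linarith) (by linarith)
      nlinarith

/-- A cubic lower bound for `P(X = m + j) / P(X = m - j)`. Its increments are proportional to
`(3 / 4) T s - 1` with `T = j (j + 1)`, whereas the relative increments of the true ratio are proportional to
`T s - 1`; the factor `3 / 4` leaves room for the lower-order terms once `m ≥ 16`. -/
theorem W_ge_cubic (m r : ℕ) (hm : 16 ≤ m) (hmr : 3 * m ≤ r) {δ s A B : ℝ}
    (hδ : δ = ((r : ℝ) - m) / (m * r)) (hs : s = ((r : ℝ) + m) / (m * r)) (hB : B = δ * s / 4)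
    (hA : A = δ + B) (j : ℕ) (hj : j ≤ m) :
    W r m j * (1 - A * j + B * (j : ℝ) ^ 3) ≤ W m r j := by
  have hm0 : (16 : ℝ) ≤ m := by exact_mod_cast hm
  have hmr' : (3 : ℝ) * m ≤ r := by exact_mod_cast hmr
  have hr0 : (0 : ℝ) < r := by linarith
  have hmp : (0 : ℝ) < m := by linarith
  have hδ0 : 0 < δ := by rw [hδ]; apply div_pos <;> nlinarith
  have hs0 : 0 < s := by rw [hs]; positivity
  have hB0 : 0 < B := by rw [hB]; positivity
  have hA0 : 0 < A := by rw [hA]; positivity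
  have hδs : δ ^ 2 ≤ s / m := by
    rw [hδ, hs, div_pow, div_div, div_le_div_iff₀ (by positivity) (by positivity)]
    have : ((r : ℝ) - m) ^ 2 ≤ (r + m) * r := by nlinarith
    calc ((r : ℝ) - m) ^ 2 * (m * r * m) ≤ ((r + m) * r) * (m * r * m) := by gcongr
      _ = _ := by ring
  have hs1 : s ≤ 1 / 12 := by
    rw [hs, div_le_div_iff₀ (by positivity) (by positivity)]
    nlinarith
  set c : ℝ := 1 / 4 - 3 / 4 / m with hc
  have hc0 : 13 / 64 ≤ c := by
    have : 3 / 4 / (m : ℝ) ≤ 3 / 4 / 16 := by gcongr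
    rw [hc]; linarith
  have hmin : ∀ x : ℝ, 0 ≤ x → A * x - B * x ^ 3 ≤ c := by
    intro x hx
    refine cubic_min hA0.le hB0 (by linarith) hx ?_
    have e1 : A ≤ δ * (49 / 48) := by rw [hA, hB]; nlinarith
    have e2 : δ ^ 2 ≤ s / 16 := hδs.trans (by gcongr)
    calc 4 * A ^ 3 ≤ 4 * (δ * (49 / 48)) ^ 3 := by gcongr
      _ = 4 * (49 / 48) ^ 3 * δ * δ ^ 2 := by ring
      _ ≤ 4 * (49 / 48) ^ 3 * δ * (s / 16) := by gcongr
      _ ≤ 27 * B * (13 / 64) ^ 2 := by rw [hB]; nlinarith [mul_pos hδ0 hs0]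
      _ ≤ 27 * B * c ^ 2 := by gcongr
  induction j with
  | zero => simp [W_zero]
  | succ j ih =>
    have ih := ih (by omega)
    have hjm : (j : ℝ) + 1 ≤ m := by exact_mod_cast hj
    have hj0 : (0 : ℝ) ≤ j := j.cast_nonneg
    set P : ℝ := 1 - A * j + B * (j : ℝ) ^ 3 with hP
    set T : ℝ := (j : ℝ) * (j + 1) with hT
    have hPmin : 3 / 4 * (1 + 1 / m) ≤ P := by
      have := hmin j hj0
      rw [hP]
      have h2 : 3 / 4 * (1 + 1 / (m : ℝ)) = 1 - c := by rw [hc]; ring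
      linarith
    have hmP : 3 / 4 * ((m : ℝ) ^ 2 + m) ≤ m ^ 2 * P := by
      calc _ = (m : ℝ) ^ 2 * (3 / 4 * (1 + 1 / m)) := by field_simp
        _ ≤ _ := by gcongr
    have hT0 : 0 ≤ T := by positivity
    have hZ : 0 ≤ (m : ℝ) ^ 2 + m - T := by rw [hT]; nlinarith
    have hms : 1 ≤ m * s := by
      rw [hs, mul_div_assoc', le_div_iff₀ (by positivity)]; nlinarith
    have core := cubic_step_core hmp hj0 hs0.le hδ0.le hms hB hA hP hT hZ hmP
    have hδ' : (r : ℝ) - m = δ * (m * r) := by rw [hδ]; field_simp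
    have hs' : (r : ℝ) + m = s * (m * r) := by rw [hs]; field_simp
    have hPs : 1 - A * ((j + 1 : ℕ) : ℝ) + B * ((j + 1 : ℕ) : ℝ) ^ 3
        = P + δ * (3 / 4 * (T * s) - 1) := by
      push_cast
      rw [hP, hT, hA, hB]; ring
    have step : (P + δ * (3 / 4 * (T * s) - 1)) * (r * (m - j) / (m * (r + j + 1)))
        ≤ P * (m * (r - j) / (r * (m + j + 1))) := by
      rw [mul_div_assoc', mul_div_assoc', div_le_div_iff₀ (by positivity) (by positivity)]
      have id1 : (m : ℝ) ^ 2 * ((r - j) * (r + j + 1)) - r ^ 2 * ((m - j) * (m + j + 1))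
          = δ * (m * r) ^ 2 * (T * s - 1) := by
        have : (m : ℝ) ^ 2 * ((r - j) * (r + j + 1)) - r ^ 2 * ((m - j) * (m + j + 1))
          = (r - m) * (T * (r + m) - m * r) := by rw [hT]; ring
        rw [this, hδ', hs']; ring
      have id2 : ((m : ℝ) - j) * (m + j + 1) = m ^ 2 + m - T := by rw [hT]; ring
      have := mul_le_mul_of_nonneg_left core (by positivity : 0 ≤ δ * (r : ℝ) ^ 2)
      have id3 : ((m : ℝ) ^ 2 + m - T) * (3 / 4 * (T * s) - 1) * (δ * r ^ 2) ≤
          P * (δ * (m * r) ^ 2 * (T * s - 1)) := by linarith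
      rw [← id1, ← id2] at id3
      linarith
    rw [hPs, W_succ, W_succ]
    have hr_nn : 0 ≤ (m : ℝ) * (r - j) / (r * (m + j + 1)) :=
      div_nonneg (mul_nonneg hmp.le (by linarith)) (by positivity)
    calc _ = W r m j * ((P + δ * (3 / 4 * (T * s) - 1)) * (r * (m - j) / (m * (r + j + 1)))) := by
          ring
      _ ≤ W r m j * (P * (m * (r - j) / (r * (m + j + 1)))) :=
          mul_le_mul_of_nonneg_left step (W_nonneg _ _ _)
      _ = (W r m j * P) * (m * (r - j) / (r * (m + j + 1))) := by ring
      _ ≤ _ := mul_le_mul_of_nonneg_right ih hr_nn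

/-- The excess of the left tail over the right tail, relative to `P(X = m)`. Here `(r - m) / (r + m)` is
`1 - 2 p`. -/
theorem W_sum_diff (m r n : ℕ) (hm : 16 ≤ m) (hmr : 3 * m ≤ r) (hr4 : r ≤ 4 * m + 5) (hn : r < n) :
    ∑ j ∈ Finset.range n, W r m j - ∑ j ∈ Finset.range n, W m r j
      ≤ 0.59 * ((r - m) / (r + m)) := by
  have hm0 : (16 : ℝ) ≤ m := by exact_mod_cast hm
  have hmr' : (3 : ℝ) * m ≤ r := by exact_mod_cast hmr
  have hr4' : (r : ℝ) ≤ 4 * m + 5 := by exact_mod_cast hr4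
  have hr0 : (0 : ℝ) < r := by linarith
  have hmp : (0 : ℝ) < m := by linarith
  obtain ⟨δ, hδ⟩ : ∃ δ : ℝ, δ = ((r : ℝ) - m) / (m * r) := ⟨_, rfl⟩
  obtain ⟨s, hs⟩ : ∃ s : ℝ, s = ((r : ℝ) + m) / (m * r) := ⟨_, rfl⟩
  obtain ⟨B, hB⟩ : ∃ B : ℝ, B = δ * s / 4 := ⟨_, rfl⟩
  obtain ⟨A, hA⟩ : ∃ A : ℝ, A = δ + B := ⟨_, rfl⟩
  have hδ0 : 0 < δ := by rw [hδ]; apply div_pos <;> nlinarith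
  have hs0 : 0 < s := by rw [hs]; positivity
  set S1 := ∑ j ∈ Finset.range n, (j : ℝ) * W r m j with hS1
  set S2 := ∑ j ∈ Finset.range n, (j : ℝ) ^ 2 * W r m j with hS2
  set S3 := ∑ j ∈ Finset.range n, (j : ℝ) ^ 3 * W r m j with hS3
  have hdiff : ∑ j ∈ Finset.range n, W r m j - ∑ j ∈ Finset.range n, W m r j
      ≤ A * S1 - B * S3 := by
    rw [hS1, hS3, Finset.mul_sum, Finset.mul_sum, ← Finset.sum_sub_distrib,
      ← Finset.sum_sub_distrib]
    refine Finset.sum_le_sum fun j _ => ?_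
    rcases le_or_gt j m with h | h
    · have := W_ge_cubic m r hm hmr hδ hs hB hA j h
      linarith
    · rw [W_eq_zero r m j h]
      have := W_nonneg m r j
      linarith
  have h1 : (r + m : ℝ) * S1 = r * m := W_sum_one r m n (by omega) (by omega)
  have h3 : (r + m : ℝ) * S3 = 2 * r * m * S1 + (m - r) * S2 :=
    W_sum_three r m n (by omega) (by omega)
  -- Termwise `j ^ 2 ≤ j ^ 3 / 10 + (5 / 2) j`, which is `j (j - 5) ^ 2 ≥ 0`.
  have h2 : S2 ≤ S3 / 10 + 5 / 2 * S1 := by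
    rw [hS1, hS2, hS3, Finset.sum_div, Finset.mul_sum, ← Finset.sum_add_distrib]
    refine Finset.sum_le_sum fun j _ => ?_
    have := mul_nonneg (mul_nonneg j.cast_nonneg (sq_nonneg ((j : ℝ) - 5))) (W_nonneg r m j)
    nlinarith
  have hsS1 : s * S1 = 1 := by
    have : S1 = r * m / (r + m) := by rw [← h1]; field_simp
    rw [this, hs]; field_simp
  have hX : 2 * (m * r : ℝ) - 5 / 2 * (r - m) ≤ (11 / 10 * r + 9 / 10 * m) * (s * S3) := by
    have e : 2 * r * m * S1 - 5 / 2 * (r - m) * S1 ≤ (11 / 10 * r + 9 / 10 * m) * S3 := by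
      nlinarith [mul_le_mul_of_nonneg_left h2 (by linarith : (0 : ℝ) ≤ r - m)]
    have := mul_le_mul_of_nonneg_left e hs0.le
    have e2 : s * (2 * r * m * S1 - 5 / 2 * (r - m) * S1)
      = (2 * (m * r : ℝ) - 5 / 2 * (r - m)) * (s * S1) := by ring
    rw [e2, hsS1] at this
    linarith
  have hX2 : 1 + 1.64 * (m * r / (r + m)) ≤ s * S3 := by
    have hp : (0 : ℝ) < 11 / 10 * r + 9 / 10 * m := by positivity
    refine le_of_mul_le_mul_left (le_trans ?_ hX) hp
    rw [← sub_nonneg]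
    have : 2 * (m * r : ℝ) - 5 / 2 * (r - m)
        - (11 / 10 * r + 9 / 10 * m) * (1 + 1.64 * (m * r / (r + m)))
        = ((2 * (m * r : ℝ) - 5 / 2 * (r - m) - (11 / 10 * r + 9 / 10 * m)) * (r + m)
          - (11 / 10 * r + 9 / 10 * m) * 1.64 * (m * r)) / (r + m) := by
      field_simp
      ring
    rw [this]
    apply div_nonneg _ (by positivity)
    have hq : 0 ≤ (m - 16 : ℝ) * (r * (0.196 * r + 0.524 * m)) :=
      mul_nonneg (by linarith) (by positivity)
    have hq2 : 0 ≤ r * (5 * m - r : ℝ) := mul_nonneg hr0.le (by linarith)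
    have hq3 : 0 ≤ (r : ℝ) * m := by positivity
    nlinarith [sq_nonneg (m : ℝ)]
  have e1 : A * S1 - B * S3 = δ * S1 + δ / 4 * (1 - s * S3) := by
    rw [hA, hB]; linear_combination (δ / 4) * hsS1
  have e2 : δ * S1 = (r - m) / (r + m) := by
    have : S1 = r * m / (r + m) := by rw [← h1]; field_simp
    rw [this, hδ]; field_simp
  have e3 : δ / 4 * (1.64 * (m * r / (r + m))) = 0.41 * ((r - m) / (r + m)) := by
    rw [hδ]; field_simp; ring
  have e4 : δ / 4 * (1 - s * S3) ≤ - (δ / 4 * (1.64 * (m * r / (r + m)))) := by nlinarith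
  rw [e1, e2] at hdiff
  rw [e3] at e4
  linarith

/-! ### Small means -/

/-- The integer `(P + Q) ^ a * P(X < k)` for `X ~ Bin(a, P / (P + Q))`. The binomial coefficient is
written as a quotient because `Nat.choose` reduces slowly. -/
def numSum (a P Q : ℕ) : ℕ → ℕ
  | 0 => 0
  | k + 1 => numSum a P Q k + a.descFactorial k / k.factorial * P ^ k * Q ^ (a - k)

/-- The upper bound at `p = P / (P + Q)` in squared integer form. The truncated subtraction makes it
automatic when `P(X ≤ m) ≤ 1 / 2`. -/
def cellOk (a m P Q : ℕ) : Prop :=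
  (2 * numSum a P Q (m + 1) - (P + Q) ^ a) ^ 2 * a * 10000 < (142 * (P + Q) ^ a) ^ 2
instance (a m P Q : ℕ) : Decidable (cellOk a m P Q) := by unfold cellOk; infer_instance

/-- The upper bound for all `m < 16` and `4 m < a ≤ 5 m + 5` (with `a = 4 m + 1 + d`), at the smallest
admissible parameter `p = max (m / a) (1 / 5)`. -/
theorem small_check : ∀ m < 16, ∀ d < m + 5,
    if 4 * m + 1 + d ≤ 5 * m then cellOk (4 * m + 1 + d) m m (3 * m + 1 + d)
    else cellOk (4 * m + 1 + d) m 1 4 := by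
  decide +kernel

theorem numSum_cast (a P Q k : ℕ) (hPQ : 0 < P + Q) (hk : k ≤ a + 1) :
    ∑ i ∈ Finset.range k, binTerm a ((P : ℝ) / (P + Q)) i
      = numSum a P Q k / ((P + Q : ℕ) : ℝ) ^ a := by
  have h0 : (P + Q : ℝ) ≠ 0 := by exact_mod_cast hPQ.ne'
  have h1 : (1 : ℝ) - P / (P + Q) = Q / (P + Q) := by field_simp; ring
  induction k with
  | zero => simp [numSum]
  | succ k ih =>
    rw [Finset.sum_range_succ, ih (by omega)]
    unfold binTerm
    rw [h1, numSum, ← Nat.choose_eq_descFactorial_div_factorial, div_pow, div_pow]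
    have h2 : (P + Q : ℝ) ^ a = (P + Q) ^ k * (P + Q) ^ (a - k) := by
      rw [← pow_add]; congr 1; omega
    push_cast
    rw [h2]
    field_simp

theorem cellOk_bound (a m P Q : ℕ) (ha : 1 ≤ a) (hm : m ≤ a) (hPQ : 0 < P + Q)
    (h : cellOk a m P Q) :
    ∑ i ∈ Finset.range (m + 1), binTerm a ((P : ℝ) / (P + Q)) i - 1 / 2 < 0.71 / √a := by
  have ha0 : (0 : ℝ) < a := by exact_mod_cast ha
  rw [numSum_cast a P Q (m + 1) hPQ (by omega)]
  unfold cellOk at h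
  set S := numSum a P Q (m + 1)
  set D := (P + Q) ^ a with hD
  have hD0 : 0 < D := by positivity
  have hD0' : (0 : ℝ) < D := by exact_mod_cast hD0
  rw [← Nat.cast_pow, ← hD]
  have hsq : 0 < √(a : ℝ) := Real.sqrt_pos.2 ha0
  rcases le_or_gt (2 * S) D with hS | hS
  · have : (S : ℝ) / D ≤ 1 / 2 := by
      rw [div_le_div_iff₀ hD0' (by norm_num)]
      have : (2 : ℝ) * S ≤ D := by exact_mod_cast hS
      linarith
    have : 0 < 0.71 / √(a : ℝ) := by positivity
    linarith
  · have h' : ((2 * S - D : ℕ) : ℝ) ^ 2 * a * 10000 < (142 * D) ^ 2 := by exact_mod_cast h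
    rw [Nat.cast_sub hS.le] at h'
    push_cast at h'
    have h3 : (2 * (S : ℝ) - D) * √a * 100 < 142 * D := by
      refine lt_of_pow_lt_pow_left₀ 2 (by positivity) ?_
      rw [mul_pow, mul_pow, Real.sq_sqrt ha0.le]
      linarith
    rw [lt_div_iff₀ hsq]
    have : ((S : ℝ) / D - 1 / 2) * √a = ((2 * (S : ℝ) - D) * √a * 100) / (200 * D) := by
      field_simp
      ring
    rw [this, div_lt_iff₀ (by positivity)]
    linarith

/-! ### Bounds at integer means and conclusion -/

/-- The lower bound at an integer mean between `a / 5` and `a / 2`. -/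
theorem lower_bound (m r : ℕ) (hm : 1 ≤ m) (hmr : m ≤ r) (h5 : m + r ≤ 5 * m) :
    1 / 2 - ∑ i ∈ Finset.range m, binTerm (m + r) (m / (m + r)) i
      < 0.71 / √((m + r : ℕ) : ℝ) := by
  have hr : 1 ≤ r := hm.trans hmr
  have hm0 : (0 : ℝ) < m := by exact_mod_cast hm
  have hr0 : (0 : ℝ) < r := by exact_mod_cast hr
  have hmr' : (m : ℝ) ≤ r := by exact_mod_cast hmr
  have h5' : (m + r : ℝ) ≤ 5 * m := by exact_mod_cast h5
  have e1 := binCdf_le_eq m r (m + r + 1) hm hr (by omega)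
  have e2 := binTerm_total m r (m + r + 1) hm hr (by omega) (by omega)
  have e3 := W_sum_le m r (m + r + 1) hm hmr (by omega)
  have e4 := binTerm_le m r hm hr
  have e5 : 0 ≤ binTerm (m + r) (m / (m + r)) m := by
    refine binTerm_nonneg _ _ (by positivity) ?_
    rw [div_le_one (by positivity)]; linarith
  rw [Finset.sum_range_succ] at e1
  set b := binTerm (m + r) (m / (m + r)) m
  have e6 : 1 / 2 - ∑ i ∈ Finset.range m, binTerm (m + r) (m / (m + r)) i ≤ 1 / 2 * b := by
    have := mul_le_mul_of_nonneg_left e3 e5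
    nlinarith
  refine (e6.trans (mul_le_mul_of_nonneg_left e4 (by norm_num))).trans_lt ?_
  rw [lt_div_iff₀ (Real.sqrt_pos.2 (by positivity)), mul_assoc, ← Real.sqrt_mul (by positivity)]
  have : √(((m : ℝ) + r) / (2 * Real.pi * m * r) * ((m + r : ℕ) : ℝ)) < 1.42 := by
    rw [Real.sqrt_lt' (by norm_num), div_mul_eq_mul_div, div_lt_iff₀ (by positivity)]
    push_cast
    have hp := Real.pi_gt_d2
    have h6 : (m + r : ℝ) * (m + r) ≤ 6.25 * (m * r) := by nlinarith
    have h7 : 3.14 * (m * r : ℝ) ≤ Real.pi * (m * r) := by gcongr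
    have h8 : 0 < (m * r : ℝ) := by positivity
    nlinarith
  linarith

/-- The upper bound at an integer mean `m ≥ 16`. Here `m / a ≥ 16 / 85` may be slightly below
`1 / 5`. -/
theorem upper_bound_large (m r : ℕ) (hm : 16 ≤ m) (hmr : 3 * m ≤ r) (hr4 : r ≤ 4 * m + 5) :
    ∑ i ∈ Finset.range (m + 1), binTerm (m + r) (m / (m + r)) i - 1 / 2
      < 0.71 / √((m + r : ℕ) : ℝ) := by
  have hr : 1 ≤ r := by omega
  have hm0 : (16 : ℝ) ≤ m := by exact_mod_cast hm
  have hmr' : (3 : ℝ) * m ≤ r := by exact_mod_cast hmr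
  have hr4' : (r : ℝ) ≤ 4 * m + 5 := by exact_mod_cast hr4
  have hr0 : (0 : ℝ) < r := by exact_mod_cast hr
  have hmp : (0 : ℝ) < m := by linarith
  have e1 := binCdf_le_eq m r (m + r + 1) (by omega) hr (by omega)
  have e2 := binTerm_total m r (m + r + 1) (by omega) hr (by omega) (by omega)
  have e3 := W_sum_diff m r (m + r + 1) hm hmr hr4 (by omega)
  have e4 := binTerm_le m r (by omega) hr
  have e5 : 0 ≤ binTerm (m + r) (m / (m + r)) m := by
    refine binTerm_nonneg _ _ (by positivity) ?_
    rw [div_le_one (by positivity)]; linarith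
  set b := binTerm (m + r) (m / (m + r)) m
  set x : ℝ := m / (m + r) with hx
  have hg : ((r : ℝ) - m) / (r + m) = 1 - 2 * x := by rw [hx]; field_simp; ring
  rw [hg] at e3
  have hx1 : 16 / 85 ≤ x := by
    rw [hx, div_le_div_iff₀ (by norm_num) (by positivity)]; linarith
  have hx2 : x ≤ 1 / 4 := by
    rw [hx, div_le_div_iff₀ (by positivity) (by norm_num)]; linarith
  have e6 : ∑ i ∈ Finset.range (m + 1), binTerm (m + r) x i - 1 / 2
      ≤ (1 + 0.59 * (1 - 2 * x)) / 2 * b := by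
    have := mul_le_mul_of_nonneg_left e3 e5
    rw [e1]
    nlinarith
  have h0 : 0 ≤ (1 + 0.59 * (1 - 2 * x)) / 2 := by linarith
  refine (e6.trans (mul_le_mul_of_nonneg_left e4 h0)).trans_lt ?_
  rw [lt_div_iff₀ (Real.sqrt_pos.2 (by positivity)), mul_assoc, ← Real.sqrt_mul (by positivity)]
  have hxx : ((m : ℝ) + r) / (2 * Real.pi * m * r) * ((m + r : ℕ) : ℝ)
      = 1 / (2 * Real.pi * (x * (1 - x))) := by
    have : 1 - x = r / (m + r) := by rw [hx]; field_simp; ring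
    rw [this, hx]
    push_cast
    field_simp
  have hxp : 0 < x * (1 - x) := mul_pos (by linarith) (by linarith)
  rw [hxx]
  refine lt_of_pow_lt_pow_left₀ 2 (by norm_num) ?_
  rw [mul_pow, Real.sq_sqrt (by positivity), mul_one_div, div_lt_iff₀ (by positivity)]
  have hp := Real.pi_gt_d4
  have h7 : 3.1415 * (x * (1 - x)) ≤ Real.pi * (x * (1 - x)) := by gcongr
  nlinarith

theorem upper_bound (a m : ℕ) (ha : 1 ≤ a) (p : ℝ) (hp1 : 1 / 5 ≤ p) (hp2 : p ≤ 1 / 4)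
    (h1 : (m : ℝ) < a * p) (h2 : (a : ℝ) * p ≤ m + 1) :
    ∑ i ∈ Finset.range (m + 1), binTerm a p i - 1 / 2 < 0.71 / √a := by
  have ha0 : (0 : ℝ) < a := by exact_mod_cast ha
  have h4 : 4 * m < a := by
    have : (4 * m : ℝ) < a := by nlinarith
    exact_mod_cast this
  have h5 : a ≤ 5 * m + 5 := by
    have : (a : ℝ) ≤ 5 * m + 5 := by nlinarith
    exact_mod_cast this
  have hmp : (m : ℝ) / a ≤ p := by rw [div_le_iff₀ ha0]; linarith
  obtain ⟨r, rfl⟩ := Nat.exists_eq_add_of_le (show m ≤ a by omega)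
  rcases le_or_gt 16 m with hm | hm
  · refine lt_of_le_of_lt ?_ (upper_bound_large m r hm (by omega) (by omega))
    push_cast at hmp
    have := binCdf_antitone (m + r) m (by positivity) hmp (by linarith)
    linarith
  · have hchk := small_check m hm (m + r - (4 * m + 1)) (by omega)
    rw [show 4 * m + 1 + (m + r - (4 * m + 1)) = m + r by omega,
      show 3 * m + 1 + (m + r - (4 * m + 1)) = r by omega] at hchk
    split_ifs at hchk with hc
    · refine lt_of_le_of_lt ?_ (cellOk_bound (m + r) m m r ha (by omega) (by omega) hchk)
      push_cast at hmp
      have := binCdf_antitone (m + r) m (by positivity) hmp (by linarith)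
      linarith
    · refine lt_of_le_of_lt ?_ (cellOk_bound (m + r) m 1 4 ha (by omega) (by omega) hchk)
      have := binCdf_antitone (m + r) m (p := ((1 : ℕ) : ℝ) / ((1 : ℕ) + (4 : ℕ))) (p' := p)
        (by positivity) (by norm_num; linarith) (by linarith)
      linarith

theorem stmt14 (a : ℕ) (ha : 1 ≤ a) (p : ℝ) (hp1 : 1 / 5 ≤ p) (hp2 : p ≤ 1 / 4) :
    |(∑ i ∈ (Finset.range (a + 1)).filter (fun i : ℕ => (i : ℝ) < (a : ℝ) * p),
        (a.choose i : ℝ) * p ^ i * (1 - p) ^ (a - i)) - 1 / 2|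
      < 0.71 / Real.sqrt a := by
  have ha0 : (1 : ℝ) ≤ a := by exact_mod_cast ha
  have hap : 0 < (a : ℝ) * p := by nlinarith
  obtain ⟨m, hm⟩ : ∃ m, ⌈(a : ℝ) * p⌉₊ = m + 1 :=
    Nat.exists_eq_succ_of_ne_zero (Nat.ceil_pos.2 hap).ne'
  have h1 : (m : ℝ) < a * p := Nat.lt_ceil.1 (by omega)
  have h2 : (a : ℝ) * p ≤ m + 1 := by
    have := Nat.le_ceil ((a : ℝ) * p)
    rw [hm] at this; exact_mod_cast this
  have h4 : 4 * m < a := by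
    have : (4 * m : ℝ) < a := by nlinarith
    exact_mod_cast this
  have h5 : a ≤ 5 * (m + 1) := by
    have : (a : ℝ) ≤ 5 * (m + 1) := by nlinarith
    exact_mod_cast this
  have hset : (Finset.range (a + 1)).filter (fun i : ℕ => (i : ℝ) < (a : ℝ) * p)
      = Finset.range (m + 1) := by
    ext i
    rw [Finset.mem_filter, Finset.mem_range, Finset.mem_range, ← Nat.lt_ceil, hm]
    omega
  rw [hset]
  change |∑ i ∈ Finset.range (m + 1), binTerm a p i - 1 / 2| < _
  rw [abs_lt]
  refine ⟨?_, upper_bound a m ha p hp1 hp2 h1 h2⟩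
  -- For `a = 1` the mean would have to be moved up to `p = 1`, where the integer-mean bound does not
  -- apply.
  rcases eq_or_ne a 1 with rfl | ha1
  · obtain rfl : m = 0 := by omega
    norm_num [binTerm]
    linarith
  · obtain ⟨r, rfl⟩ := Nat.exists_eq_add_of_le (show m + 1 ≤ a by omega)
    have hl := lower_bound (m + 1) r (by omega) (by omega) (by omega)
    have hle : p ≤ ((m + 1 : ℕ) : ℝ) / ((m + 1 : ℕ) + r) := by
      rw [le_div_iff₀ (by positivity)]
      push_cast at h2 ⊢
      linarith
    have := binCdf_antitone (m + 1 + r) m (by linarith) hle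
      (by rw [div_le_one (by positivity)]; linarith [(r.cast_nonneg : (0 : ℝ) ≤ r)])
    linarith
end

section
/- For integers n > 12·10⁴, k with n/5 < k < n/4, and a with 15 ≤ a ≤ n/5, one has ∑_{i < ka/n} C(a,i)·C(n−a,k−i) < (3/4)·C(n,k), hence ∑_{i < ka/n} C(a,i)C(n−a,k−i) < C(n−1,k−1) + C(n−1,k) − C(n−1,k−1)·0 — in particular ∑_{i > ka/n} C(a,i)C(n−a,k−i) > (1/4)C(n,k). -/
/-!
Write `f i = C(a,i) C(n-a,k-i)`, let `m = ⌊ka/n⌋` (so `m ≥ 3`) and let `H = ∑_{i > m} f i`.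
By Vandermonde both inequalities follow from `∑_{i ≤ m} f i < 3 H`, and this is shown by
reflecting the lower tail about `m`, without passing through the binomial distribution.

Put `A = a - m`, `K = k - m`, `N = n - a - k + m`; then `m ≤ ka/n` says exactly `m N ≤ A K`.
The quotient `f (m+j) / f (m-j)` is the product over `i < j` of
`R i = (A²+A-t)(K²+K-t) / ((m²+m-t)(N²+N-t))`, where `t = i(i+1)`, and
numerator minus denominator is at least `(m+N-A-K) (t(n+1) - mN)` (`ratio_core`).
Hence `R i ≥ 1` as soon as `2 i ≥ m`, while always `R i ≥ 1 - (3/4)/(m+1)`. At most `(m+1)/2`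
factors are below `1`, so `f (m+j) ≥ (5/8) f (m-j)` (`reflect_bound`), which gives
`∑_{i < m} f i ≤ (8/5) H`. The central term satisfies `f m ≤ 1.39 f (m+1) ≤ 1.39 H`, and
`8/5 + 1.39 < 3`.
-/

/-- The unnormalised hypergeometric weight `C(a,i) C(n-a,k-i)`, as a real number; it is only used
for `i ≤ k` and `a ≤ n`, where no natural subtraction truncates. -/
noncomputable def hyp (n k a i : ℕ) : ℝ := ((a.choose i * (n - a).choose (k - i) : ℕ) : ℝ)

lemma hyp_nonneg (n k a i : ℕ) : 0 ≤ hyp n k a i := Nat.cast_nonneg _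

lemma hyp_pos {n k a i : ℕ} (hi : i ≤ a) (h : a + k ≤ n) : 0 < hyp n k a i := by
  unfold hyp
  exact_mod_cast Nat.mul_pos (Nat.choose_pos hi) (Nat.choose_pos (by omega))

lemma hyp_succ {n k a i : ℕ} (hi : i < k) (hia : i ≤ a) (h : a + k ≤ n) :
    hyp n k a (i + 1) * (((i : ℝ) + 1) * ((n : ℝ) - a - k + i + 1)) =
      hyp n k a i * (((a : ℝ) - i) * ((k : ℝ) - i)) := by
  obtain ⟨l, rfl⟩ : ∃ l, k = i + 1 + l := ⟨k - (i + 1), by omega⟩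
  have e1 := Nat.choose_succ_right_eq a i
  have e2 := Nat.choose_succ_right_eq (n - a) l
  have h1 : i + 1 + l - (i + 1) = l := by omega
  have h2 : i + 1 + l - i = l + 1 := by omega
  unfold hyp
  rw [h1, h2]
  have e1' : (a.choose (i + 1) : ℝ) * (i + 1) = a.choose i * ((a : ℝ) - i) := by
    rw [← Nat.cast_sub hia]; exact_mod_cast e1
  have e2' : ((n - a).choose (l + 1) : ℝ) * (l + 1) = (n - a).choose l * ((n : ℝ) - a - l) := by
    rw [← Nat.cast_sub (by omega : a ≤ n), ← Nat.cast_sub (by omega : l ≤ n - a)]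
    exact_mod_cast e2
  push_cast
  linear_combination ((n - a).choose l : ℝ) * ((n : ℝ) - a - l) * e1'
    - (a.choose i : ℝ) * ((a : ℝ) - i) * e2'

lemma sum_hyp {n k a : ℕ} (h : a ≤ n) :
    ∑ i ∈ Finset.range (k + 1), hyp n k a i = (n.choose k : ℝ) := by
  have e := Nat.add_choose_eq a (n - a) k
  rw [Nat.add_sub_cancel' h, Finset.Nat.sum_antidiagonal_eq_sum_range_succ_mk] at e
  rw [e]
  unfold hyp
  push_cast
  rfl

/-- For `M * N = A * K` the two sides are equal; with `A + K` fixed, the right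
side only grows with the product `A * K`. -/
lemma ratio_core {A K M N t : ℝ} (hA : 0 ≤ A) (hK : 0 ≤ K) (hM : 0 ≤ M) (hN : 0 ≤ N)
    (ht : 0 ≤ t) (hP : M * N ≤ A * K) :
    (M + N - A - K) * (t * (A + K + M + N + 1) - M * N) ≤
      (A ^ 2 + A - t) * (K ^ 2 + K - t) - (M ^ 2 + M - t) * (N ^ 2 + N - t) := by
  have h1 : 0 ≤ A * K + M * N + (A + K) + 1 + 2 * t := by positivity
  nlinarith [mul_nonneg (sub_nonneg.2 hP) h1]

lemma ratio_ge_one {A K M N t : ℝ} (hA : 0 ≤ A) (hK : 0 ≤ K) (hM : 0 ≤ M) (hN : 0 ≤ N)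
    (ht : M ≤ t) (hP : M * N ≤ A * K) (hS : A + K ≤ M + N) :
    (M ^ 2 + M - t) * (N ^ 2 + N - t) ≤ (A ^ 2 + A - t) * (K ^ 2 + K - t) := by
  have h := ratio_core hA hK hM hN (hM.trans ht) hP
  have h2 : 0 ≤ t * (A + K + M + N + 1) - M * N := by
    have : M * N ≤ t * (A + K + M + N + 1) :=
      mul_le_mul ht (by linarith) hN (hM.trans ht)
    linarith
  have h3 := mul_nonneg (by linarith : 0 ≤ M + N - A - K) h2
  linarith

lemma ratio_ge {A K M N t : ℝ} (hA : 0 ≤ A) (hK : 0 ≤ K) (hM : 0 ≤ M) (hMN : M ≤ N)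
    (hN1 : 1 ≤ N)
    (ht : 0 ≤ t) (htM : t ≤ M) (hP : M * N ≤ A * K) (hS : A + K ≤ M + N)
    (hS' : M + N - A - K ≤ 3 / 4 * N) :
    (1 - 3 / 4 / (M + 1)) * ((M ^ 2 + M - t) * (N ^ 2 + N - t)) ≤
      (A ^ 2 + A - t) * (K ^ 2 + K - t) := by
  have hN : 0 ≤ N := hM.trans hMN
  have h := ratio_core hA hK hM hN ht hP
  set Y := (M ^ 2 + M - t) * (N ^ 2 + N - t) with hY
  have hYpos : 0 ≤ Y := mul_nonneg (by nlinarith) (by nlinarith)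
  have key : (M + 1) * (N * (M * N - t * (A + K + M + N + 1))) ≤ Y := by
    have h1 : 0 ≤ t * ((M + 1) * N * (A + K + M + N + 1) - N * (N + 1) - M * (M + 1)) := by
      apply mul_nonneg ht
      have e1 : N * (M + N + 1) ≤ N * (A + K + M + N + 1) := by
        apply mul_le_mul_of_nonneg_left _ hN; linarith
      have e2 : 0 ≤ M * (N * (A + K + M + N + 1) - N * (M + N + 1)) :=
        mul_nonneg hM (by linarith)
      nlinarith [mul_nonneg hM hN, mul_nonneg hM (sub_nonneg.2 hMN),
        mul_nonneg hM (sub_nonneg.2 hN1),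
        mul_nonneg (mul_nonneg hM hM) hN, mul_nonneg (mul_nonneg hM hN) hN]
    have h2 : 0 ≤ M * (M + 1) * (N - t) :=
      mul_nonneg (by positivity) (by linarith)
    rw [hY]
    nlinarith [sq_nonneg t]
  have h3 : (M + N - A - K) * (M * N - t * (A + K + M + N + 1)) ≤ 3 / 4 / (M + 1) * Y := by
    rw [div_mul_eq_mul_div, le_div_iff₀ (by linarith)]
    rcases le_total 0 (M * N - t * (A + K + M + N + 1)) with hc | hc
    · have := mul_le_mul_of_nonneg_right hS' hc
      have := mul_le_mul_of_nonneg_right this (by linarith : 0 ≤ M + 1)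
      linarith
    · have := mul_nonneg (by linarith : 0 ≤ M + N - A - K) (neg_nonneg.2 hc)
      have := mul_nonneg this (by linarith : 0 ≤ M + 1)
      linarith
  linarith

/-- One reflection step: if `F' / F = p / q` and `G' / G = q' / p'`, a bound `c G ≤ F` turns into
`c' G' ≤ F'` provided `c' ≤ c (p p') / (q q')`. -/
lemma reflect_step {F F' G G' p p' q q' c c' r : ℝ} (hG : 0 ≤ G')
    (hp : 0 ≤ p) (hq : 0 < q) (hq' : 0 < q') (hc : 0 ≤ c)
    (hF' : F' * q = F * p) (hG' : G' * p' = G * q')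
    (h : c * G ≤ F) (hr : r * (q * q') ≤ p * p') (hcr : c' ≤ c * r) : c' * G' ≤ F' := by
  have h1 : c * G * p ≤ F' * q := by rw [hF']; exact mul_le_mul_of_nonneg_right h hp
  have h2 : c * (G' * (p * p')) ≤ F' * (q * q') := by
    calc c * (G' * (p * p')) = c * G * p * q' := by
          linear_combination c * p * hG'
      _ ≤ F' * q * q' := mul_le_mul_of_nonneg_right h1 hq'.le
      _ = _ := by ring
  have h3 : c * (G' * (r * (q * q'))) ≤ c * (G' * (p * p')) :=
    mul_le_mul_of_nonneg_left (mul_le_mul_of_nonneg_left hr hG) hc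
  have h4 : c * r * G' * (q * q') ≤ F' * (q * q') := by linarith
  have h5 := le_of_mul_le_mul_right h4 (mul_pos hq hq')
  exact (mul_le_mul_of_nonneg_right hcr hG).trans h5

set_option maxHeartbeats 1000000 in
/-- Lower tail terms against their mirror images. The first `(m+1)/2` steps each lose at most a
factor `1 - (3/4)/(m+1)`, tracked by the second conjunct; later steps lose nothing. -/
lemma reflect_bound {n k a m : ℕ} (hm3 : 3 ≤ m) (hma : 4 * m ≤ a) (hmk : 5 * m ≤ k)
    (hmn : n * m ≤ k * a) (hk1 : n < 5 * k) (hk2 : 4 * k < n) (ha2 : 5 * a ≤ n) (j : ℕ)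
    (hj : j ≤ m) :
    5 / 8 * hyp n k a (m - j) ≤ hyp n k a (m + j) ∧
    (2 * j ≤ m + 1 →
      (1 - 3 / 4 / ((m : ℝ) + 1) * j) * hyp n k a (m - j) ≤ hyp n k a (m + j)) := by
  induction j with
  | zero =>
    have := hyp_nonneg n k a m
    simp only [Nat.sub_zero, Nat.add_zero, Nat.cast_zero, mul_zero, sub_zero, one_mul]
    exact ⟨by linarith, fun _ => le_refl _⟩
  | succ j ih =>
    obtain ⟨ih1, ih2⟩ := ih (by omega)
    obtain ⟨d, rfl⟩ : ∃ d, m = j + 1 + d := ⟨m - (j + 1), by omega⟩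
    have s1 : j + 1 + d - (j + 1) = d := by omega
    have s2 : j + 1 + d - j = d + 1 := by omega
    have hak : a + k ≤ n := by omega
    have rF := hyp_succ (n := n) (k := k) (a := a) (i := j + 1 + d + j)
      (by omega) (by omega) hak
    have rG := hyp_succ (n := n) (k := k) (a := a) (i := d) (by omega) (by omega) hak
    rw [s1]
    rw [s2] at ih1 ih2
    rw [← Nat.add_assoc]
    have hmN : (n : ℝ) * ((j + 1 + d : ℕ) : ℝ) ≤ k * a := by exact_mod_cast hmn
    have hd : ((j + 1 + d : ℕ) : ℝ) = j + 1 + d := by push_cast; ring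
    have hd' : ((j + 1 + d + j : ℕ) : ℝ) = ((j + 1 + d : ℕ) : ℝ) + j := by push_cast; ring
    rw [hd'] at rF
    have hde : (d : ℝ) = ((j + 1 + d : ℕ) : ℝ) - j - 1 := by push_cast; ring
    have hjM : (j : ℝ) + 1 ≤ ((j + 1 + d : ℕ) : ℝ) := by rw [hd]; linarith [d.cast_nonneg (α := ℝ)]
    rw [hde] at rG
    have hm3' : (3 : ℝ) ≤ ((j + 1 + d : ℕ) : ℝ) := by exact_mod_cast hm3
    have hma' : 4 * ((j + 1 + d : ℕ) : ℝ) ≤ a := by exact_mod_cast hma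
    have hmk' : 5 * ((j + 1 + d : ℕ) : ℝ) ≤ k := by exact_mod_cast hmk
    have hk1' : (n : ℝ) < 5 * k := by exact_mod_cast hk1
    have hk2' : 4 * (k : ℝ) < n := by exact_mod_cast hk2
    have ha2' : 5 * (a : ℝ) ≤ n := by exact_mod_cast ha2
    have hj0 : (0 : ℝ) ≤ j := j.cast_nonneg
    have hcase : 2 * j < j + 1 + d ∨ ((j + 1 + d : ℕ) : ℝ) ≤ 2 * j := by
      rcases lt_or_ge (2 * j) (j + 1 + d) with h | h
      · exact Or.inl h
      · exact Or.inr (by exact_mod_cast h)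
    have hG0 := hyp_nonneg n k a d
    have hG1 := hyp_nonneg n k a (d + 1)
    have hcase2 : 2 * (j + 1) ≤ j + 1 + d + 1 → 2 * (j : ℝ) ≤ ((j + 1 + d : ℕ) : ℝ) - 1 := by
      intro h
      have : ((2 * (j + 1) : ℕ) : ℝ) ≤ ((j + 1 + d + 1 : ℕ) : ℝ) := by exact_mod_cast h
      push_cast at this ⊢; linarith
    generalize ((j + 1 + d : ℕ) : ℝ) = M at *
    generalize hF : hyp n k a (j + 1 + d + j) = F at *
    generalize hF' : hyp n k a (j + 1 + d + j + 1) = F' at *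
    generalize hG : hyp n k a (d + 1) = G at *
    generalize hG' : hyp n k a d = G' at *
    set A : ℝ := a - M with hA
    set K : ℝ := k - M with hK
    set N : ℝ := (n : ℝ) - a - k + M with hN
    have hP : M * N ≤ A * K := by rw [hA, hK, hN]; linarith
    have hS : A + K ≤ M + N := by linarith
    have hS' : M + N - A - K ≤ 3 / 4 * N := by
      -- Equivalent to `3.25 m + 0.25 n ≤ 1.25 (a + k)`; multiply by `n` and use `n m ≤ k a`.
      have hn0 : (0 : ℝ) < n := by linarith
      have : (n : ℝ) * (13 * M + n) ≤ n * (5 * (a + k)) := by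
        have h1 : (0 : ℝ) ≤ (5 * k - n) * (n - 5 * a) := mul_nonneg (by linarith) (by linarith)
        have h2 : (0 : ℝ) ≤ k * a := by positivity
        linarith
      have := le_of_mul_le_mul_left this hn0
      linarith
    have hA0 : 3 * M ≤ A := by linarith
    have hK0 : 4 * M ≤ K := by linarith
    have hN0 : 4 * M ≤ N := by linarith
    have hp : 0 ≤ (A - j) * (K - j) := mul_nonneg (by linarith) (by linarith)
    have hq : 0 < (M + j + 1) * (N + j + 1) := mul_pos (by linarith) (by linarith)
    have hq' : 0 < (M - j) * (N - j) := mul_pos (by linarith) (by linarith)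
    have rF1 : F' * ((M + j + 1) * (N + j + 1)) = F * ((A - j) * (K - j)) := by
      rw [hA, hK, hN]; linear_combination rF
    have rG1 : G' * ((A + j + 1) * (K + j + 1)) = G * ((M - j) * (N - j)) := by
      rw [hA, hK, hN]; linear_combination -rG
    have eq1 : (M + j + 1) * (N + j + 1) * ((M - j) * (N - j)) =
        (M ^ 2 + M - j * (j + 1)) * (N ^ 2 + N - j * (j + 1)) := by ring
    have eq2 : (A - j) * (K - j) * ((A + j + 1) * (K + j + 1)) =
        (A ^ 2 + A - j * (j + 1)) * (K ^ 2 + K - j * (j + 1)) := by ring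
    -- When `j (j+1) ≥ M` the ratio is at least one.
    have big : M ≤ j * (j + 1) → 5 / 8 * G' ≤ F' := fun hb =>
      reflect_step (r := 1) hG0 hp hq hq' (by norm_num) rF1 rG1 ih1
        (by rw [one_mul, eq1, eq2]
            exact ratio_ge_one (by linarith) (by linarith) (by linarith) (by linarith) hb hP hS)
        (by norm_num)
    set δ : ℝ := 3 / 4 / (M + 1) with hδ
    have hδM : δ * (M + 1) = 3 / 4 := div_mul_cancel₀ _ (by linarith)
    have hδ0 : 0 < δ := by positivity
    have small : 2 * (j : ℝ) ≤ M - 1 → (1 - δ * (j + 1)) * G' ≤ F' := by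
      intro hs
      have hj1 : δ * (2 * j + 2) ≤ δ * (M + 1) := mul_le_mul_of_nonneg_left (by linarith) hδ0.le
      have hc : 0 ≤ 1 - δ * j := by linarith
      have hjn : 2 * j ≤ j + 1 + d + 1 := by
        rcases hcase with h | h
        · omega
        · linarith
      refine reflect_step (r := 1 - δ) hG0 hp hq hq' hc rF1 rG1 (ih2 hjn) ?_ ?_
      · rw [eq1, eq2]
        rcases le_total (j * (j + 1) : ℝ) M with hb | hb
        · exact ratio_ge (by linarith) (by linarith) (by linarith) (by linarith) (by linarith)
            (by positivity) hb hP hS hS'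
        · have h1 := ratio_ge_one (by linarith) (by linarith) (by linarith) (by linarith) hb hP hS
          rw [← eq1] at h1 ⊢
          have h2 := mul_pos hδ0 (mul_pos hq hq')
          linarith
      · have := mul_nonneg (mul_nonneg hδ0.le hδ0.le) hj0
        linarith
    push_cast
    refine ⟨?_, fun h => small (hcase2 h)⟩
    rcases hcase with h | h
    · have hs : 2 * (j : ℝ) ≤ M - 1 := hcase2 (by omega)
      have hj1 : δ * (2 * j + 2) ≤ δ * (M + 1) := mul_le_mul_of_nonneg_left (by linarith) hδ0.le
      have hc : 5 / 8 ≤ 1 - δ * (j + 1) := by linarith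
      exact (mul_le_mul_of_nonneg_right hc hG0).trans (small hs)
    · have h3 : 3 / 2 * (j : ℝ) ≤ j * j := mul_le_mul_of_nonneg_right (by linarith) hj0
      exact big (by linarith)

theorem stmt15 (n k a : ℕ) (hn : 12 * 10 ^ 4 < n) (hk1 : n < 5 * k) (hk2 : 4 * k < n)
    (ha1 : 15 ≤ a) (ha2 : 5 * a ≤ n) :
    ((∑ i ∈ (Finset.range (k + 1)).filter (fun i => n * i < k * a),
        a.choose i * (n - a).choose (k - i) : ℕ) : ℝ) < 3 / 4 * (n.choose k : ℝ) ∧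
    (1 / 4 : ℝ) * (n.choose k : ℝ) <
      ((∑ i ∈ (Finset.range (k + 1)).filter (fun i => k * a < n * i),
        a.choose i * (n - a).choose (k - i) : ℕ) : ℝ) := by
  have hn0 : 0 < n := by omega
  obtain ⟨m, hm⟩ : ∃ m, m = k * a / n := ⟨_, rfl⟩
  have hmn : n * m ≤ k * a := by rw [hm]; exact Nat.mul_div_le _ _
  have hmn' : k * a < n * (m + 1) := by rw [hm]; exact Nat.lt_mul_div_succ _ hn0
  have hm3 : 3 ≤ m := by
    rw [hm, Nat.le_div_iff_mul_le hn0]; nlinarith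
  have hma : 4 * m ≤ a := by
    by_contra! h
    nlinarith
  have hmk : 5 * m ≤ k := by
    by_contra! h
    nlinarith
  have hak : a + k ≤ n := by omega
  have split : (∑ i ∈ Finset.range (m + 1), hyp n k a i) +
      ∑ i ∈ Finset.Ico (m + 1) (k + 1), hyp n k a i = (n.choose k : ℝ) := by
    rw [Finset.sum_range_add_sum_Ico _ (by omega), sum_hyp (by omega)]
  set H := ∑ i ∈ Finset.Ico (m + 1) (k + 1), hyp n k a i with hH
  have up : ((∑ i ∈ (Finset.range (k + 1)).filter (fun i => k * a < n * i),
        a.choose i * (n - a).choose (k - i) : ℕ) : ℝ) = H := by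
    rw [hH, Nat.cast_sum]
    apply Finset.sum_congr _ (fun _ _ => rfl)
    ext i
    simp only [Finset.mem_filter, Finset.mem_range, Finset.mem_Ico]
    constructor
    · rintro ⟨h1, h2⟩
      exact ⟨Nat.lt_of_mul_lt_mul_left (hmn.trans_lt h2), h1⟩
    · rintro ⟨h1, h2⟩
      exact ⟨h2, hmn'.trans_le (Nat.mul_le_mul_left _ h1)⟩
  have low : ((∑ i ∈ (Finset.range (k + 1)).filter (fun i => n * i < k * a),
        a.choose i * (n - a).choose (k - i) : ℕ) : ℝ) ≤
      ∑ i ∈ Finset.range (m + 1), hyp n k a i := by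
    rw [Nat.cast_sum]
    apply Finset.sum_le_sum_of_subset_of_nonneg _ (fun i _ _ => hyp_nonneg n k a i)
    intro i
    simp only [Finset.mem_filter, Finset.mem_range]
    rintro ⟨-, h2⟩
    exact Nat.lt_of_mul_lt_mul_left (h2.trans hmn')
  have tail : 5 / 8 * ∑ i ∈ Finset.range m, hyp n k a i ≤ H := by
    rw [← Finset.sum_range_reflect, Finset.mul_sum]
    calc ∑ j ∈ Finset.range m, 5 / 8 * hyp n k a (m - 1 - j)
        ≤ ∑ j ∈ Finset.range m, hyp n k a (m + 1 + j) := by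
          apply Finset.sum_le_sum
          intro j hj
          have hj := Finset.mem_range.1 hj
          have := (reflect_bound hm3 hma hmk hmn hk1 hk2 ha2 (j + 1) hj).1
          rwa [show m - (j + 1) = m - 1 - j by omega, show m + (j + 1) = m + 1 + j by omega] at this
      _ = ∑ i ∈ Finset.Ico (m + 1) (2 * m + 1), hyp n k a i := by
          rw [Finset.sum_Ico_eq_sum_range, show 2 * m + 1 - (m + 1) = m by omega]
      _ ≤ H := by
          apply Finset.sum_le_sum_of_subset_of_nonneg _ (fun i _ _ => hyp_nonneg n k a i)
          exact Finset.Ico_subset_Ico_right (by omega)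
  have first : hyp n k a (m + 1) ≤ H :=
    Finset.single_le_sum (fun i _ => hyp_nonneg n k a i)
      (Finset.mem_Ico.2 ⟨le_refl _, by omega⟩)
  have fpos : 0 < hyp n k a (m + 1) := hyp_pos (by omega) hak
  have centre : hyp n k a m ≤ 139 / 100 * hyp n k a (m + 1) := by
    have r := hyp_succ (n := n) (k := k) (a := a) (i := m) (by omega) (by omega) hak
    have hm3' : (3 : ℝ) ≤ m := by exact_mod_cast hm3
    have hmn1 : (n : ℝ) * m ≤ k * a := by exact_mod_cast hmn
    have hk2' : 4 * (k : ℝ) < n := by exact_mod_cast hk2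
    have ha2' : 5 * (a : ℝ) ≤ n := by exact_mod_cast ha2
    have hn' : (120000 : ℝ) < n := by exact_mod_cast hn
    have hf := hyp_nonneg n k a m
    set N : ℝ := (n : ℝ) - a - k + m with hN
    have hN0 : 1000 ≤ N := by linarith
    have h1 : (m : ℝ) * N ≤ ((a : ℝ) - m) * ((k : ℝ) - m) := by rw [hN]; nlinarith
    have h2 : ((m : ℝ) + 1) * (N + 1) ≤ 139 / 100 * (m * N) := by nlinarith
    have h3 : (0 : ℝ) < (m + 1) * (N + 1) := by positivity
    refine le_of_mul_le_mul_right ?_ h3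
    calc hyp n k a m * ((m + 1) * (N + 1)) ≤ hyp n k a m * (139 / 100 * (m * N)) :=
          mul_le_mul_of_nonneg_left h2 hf
      _ ≤ hyp n k a m * (139 / 100 * (((a : ℝ) - m) * ((k : ℝ) - m))) := by gcongr
      _ = _ := by linear_combination (-139 / 100) * r
  rw [Finset.sum_range_succ] at split low
  rw [up]
  constructor <;> linarith
end
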